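/- arXiv:1307.5505 — 2 statements merged into one kernel-verified Lean document; each statement's English description precedes it below -/
import Mathlib

section
/- Let R be a commutative ring over which every flat module has finite cotorsion dimension bounded by n. Then any bounded acyclic complex of flat R-modules whose components are all cotorsion is contractible (homotopy equivalent to zero). -/
/-!
Let `Zⁱ = ker dⁱ` be the syzygies of the complex, so that `0 → Zⁱ → Cⁱ → Zⁱ⁺¹ → 0` is exact.
Kernels of surjections between flat modules are flat, so descending induction from the top of the
complex shows that every `Zⁱ` is flat. Quotients of cotorsion modules by cotorsion submodules are
cotorsion, because `Ext²(F, -)` also vanishes on cotorsion modules for flat `F`; so ascending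
induction from the bottom shows that every `Zⁱ` is cotorsion. Hence `Ext¹(Zⁱ⁺¹, Zⁱ) = 0`, all these
sequences split, and the sections assemble into a contraction.
-/

open CategoryTheory

universe u

section Defs

variable (R : Type u) [CommRing R]

/-- A linear map is a pure monomorphism if it is injective and stays injective
after tensoring with any module. -/
def IsPureMono {A B : Type u} [AddCommGroup A] [Module R A] [AddCommGroup B] [Module R B]
    (f : A →ₗ[R] B) : Prop :=
  Function.Injective f ∧
    ∀ (P : Type u) [AddCommGroup P] [Module R P],
      Function.Injective (LinearMap.rTensor P f)

/-- A module is pure injective if it is injective with respect to pure monomorphisms. -/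
def IsPureInjective (E : Type u) [AddCommGroup E] [Module R E] : Prop :=
  ∀ ⦃A B : Type u⦄ [AddCommGroup A] [Module R A] [AddCommGroup B] [Module R B]
    (f : A →ₗ[R] B), IsPureMono R f →
      ∀ g : A →ₗ[R] E, ∃ h : B →ₗ[R] E, h.comp f = g

/-- Vanishing of `Ext^n`. -/
def extVanish (n : ℕ) (M N : Type u) [AddCommGroup M] [Module R M]
    [AddCommGroup N] [Module R N] : Prop :=
  Subsingleton (((Ext R (ModuleCat.{u} R) n).obj
    (Opposite.op (ModuleCat.of R M))).obj (ModuleCat.of R N))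

/-- A module `C` is cotorsion if `Ext¹(F, C) = 0` for every flat module `F`. -/
def IsCotorsion (C : Type u) [AddCommGroup C] [Module R C] : Prop :=
  ∀ (F : Type u) [AddCommGroup F] [Module R F], Module.Flat R F →
    extVanish R 1 F C

/-- Short exact sequence of modules. -/
def IsShortExact {A B C : Type u} [AddCommGroup A] [Module R A] [AddCommGroup B] [Module R B]
    [AddCommGroup C] [Module R C] (f : A →ₗ[R] B) (g : B →ₗ[R] C) : Prop :=
  Function.Injective f ∧ Function.Surjective g ∧ LinearMap.ker g = LinearMap.range f

/-- Pure short exact sequence. -/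
def IsPureShortExact {A B C : Type u} [AddCommGroup A] [Module R A] [AddCommGroup B]
    [Module R B] [AddCommGroup C] [Module R C] (f : A →ₗ[R] B) (g : B →ₗ[R] C) : Prop :=
  IsShortExact R f g ∧
    ∀ (P : Type u) [AddCommGroup P] [Module R P],
      Function.Injective (LinearMap.rTensor P f)

/-- A cotorsion resolution `0 → M → C⁰ → ⋯ → Cⁿ → 0` of length `n`. -/
structure CotorsionResolution (M : Type u) [AddCommGroup M] [Module R M] (n : ℕ) where
  C : ℕ → Type u
  [acg : ∀ i, AddCommGroup (C i)]
  [mod : ∀ i, Module R (C i)]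
  f : M →ₗ[R] C 0
  d : ∀ i, C i →ₗ[R] C (i + 1)
  hf : Function.Injective f
  hd0 : LinearMap.ker (d 0) = LinearMap.range f
  hd : ∀ i, LinearMap.ker (d (i + 1)) = LinearMap.range (d i)
  hcot : ∀ i, IsCotorsion R (C i)
  htail : ∀ i, n < i → Subsingleton (C i)

/-- `M` has cotorsion dimension at most `n`. -/
def cotorsionDimLE (M : Type u) [AddCommGroup M] [Module R M] (n : ℕ) : Prop :=
  Nonempty (CotorsionResolution R M n)

/-- A pure injective resolution `0 → M → E⁰ → ⋯ → Eⁿ → 0` of length `n`,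
pure exact in each degree. -/
structure PureInjectiveResolution (M : Type u) [AddCommGroup M] [Module R M] (n : ℕ) where
  E : ℕ → Type u
  [acg : ∀ i, AddCommGroup (E i)]
  [mod : ∀ i, Module R (E i)]
  f : M →ₗ[R] E 0
  d : ∀ i, E i →ₗ[R] E (i + 1)
  hf : Function.Injective f
  hd0 : LinearMap.ker (d 0) = LinearMap.range f
  hd : ∀ i, LinearMap.ker (d (i + 1)) = LinearMap.range (d i)
  hpinj : ∀ i, IsPureInjective R (E i)
  htail : ∀ i, n < i → Subsingleton (E i)
  pure : ∀ (P : Type u) [AddCommGroup P] [Module R P],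
    Function.Injective (LinearMap.rTensor P f) ∧
    LinearMap.ker (LinearMap.rTensor P (d 0)) = LinearMap.range (LinearMap.rTensor P f) ∧
    ∀ i, LinearMap.ker (LinearMap.rTensor P (d (i + 1))) =
      LinearMap.range (LinearMap.rTensor P (d i))

/-- `M` has pure injective dimension at most `n`. -/
def pureInjDimLE (M : Type u) [AddCommGroup M] [Module R M] (n : ℕ) : Prop :=
  Nonempty (PureInjectiveResolution R M n)

end Defs

open LinearMap

section ExtComparison

variable {C : Type*} [Category* C] [Abelian C] {X : C} (P : ProjectiveResolution X) (Y : C) (n : ℕ)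

lemma subsingleton_leftDerivedExt_succ_iff_forall_exists_coboundary (R : Type*) [Ring R]
    [Linear R C] [EnoughProjectives C] :
    Subsingleton (((Ext R C (n + 1)).obj (Opposite.op X)).obj Y) ↔
      ∀ φ : P.complex.X (n + 1) ⟶ Y, P.complex.d (n + 2) (n + 1) ≫ φ = 0 →
        ∃ ψ : P.complex.X n ⟶ Y, P.complex.d (n + 1) n ≫ ψ = φ := by
  rw [← ModuleCat.isZero_iff_subsingleton, (P.isoExt (n + 1) Y).isZero_iff,
    ← HomologicalComplex.exactAt_iff_isZero_homology,
    HomologicalComplex.exactAt_iff' _ n (n + 1) (n + 2) (by simp) (by simp),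
    ShortComplex.moduleCat_exact_iff]
  rfl

lemma subsingleton_abelianExt_succ_iff_forall_exists_coboundary [HasExt C] :
    Subsingleton (Abelian.Ext X Y (n + 1)) ↔
      ∀ φ : P.complex.X (n + 1) ⟶ Y, P.complex.d (n + 2) (n + 1) ≫ φ = 0 →
        ∃ ψ : P.complex.X n ⟶ Y, P.complex.d (n + 1) n ≫ ψ = φ := by
  constructor
  · intro _ φ hφ
    exact (P.extMk_eq_zero_iff φ (n + 2) rfl hφ n rfl).1 (Subsingleton.elim _ _)
  · intro h
    refine subsingleton_of_forall_eq 0 fun α ↦ ?_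
    obtain ⟨φ, hφ, rfl⟩ := P.extMk_surjective α (n + 2) rfl
    exact (P.extMk_eq_zero_iff φ (n + 2) rfl hφ n rfl).2 (h φ hφ)

end ExtComparison

section ExtOfShortExact

variable {C : Type*} [Category* C] [Abelian C] [HasExt C] {S : ShortComplex C}

lemma subsingleton_ext_right_of_shortExact (hS : S.ShortExact) (X : C) (n : ℕ)
    [Subsingleton (Abelian.Ext X S.X₂ n)] [Subsingleton (Abelian.Ext X S.X₁ (n + 1))] :
    Subsingleton (Abelian.Ext X S.X₃ n) := by
  refine subsingleton_of_forall_eq 0 fun α ↦ ?_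
  obtain ⟨β, rfl⟩ := Abelian.Ext.covariant_sequence_exact₃ X hS α rfl (Subsingleton.elim _ _)
  rw [Subsingleton.elim β 0, Abelian.Ext.zero_comp]

lemma isSplitEpi_of_shortExact_of_subsingleton_ext_one (hS : S.ShortExact)
    [Subsingleton (Abelian.Ext S.X₃ S.X₁ 1)] : IsSplitEpi S.g := by
  obtain ⟨α, hα⟩ := Abelian.Ext.covariant_sequence_exact₃ S.X₃ hS (Abelian.Ext.mk₀ (𝟙 S.X₃)) rfl
    (Subsingleton.elim _ _)
  obtain ⟨s, rfl⟩ := Abelian.Ext.homEquiv₀.symm.surjective α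
  exact ⟨⟨s, Abelian.Ext.homEquiv₀.symm.injective (by simpa using hα)⟩⟩

end ExtOfShortExact

section ShortExactSequences

variable {R : Type*} [CommRing R] {A B F : Type*} [AddCommGroup A] [Module R A]
  [AddCommGroup B] [Module R B] [AddCommGroup F] [Module R F]

lemma flat_of_exact_of_flat [Module.Flat R B] [Module.Flat R F] {f : A →ₗ[R] B} {g : B →ₗ[R] F}
    (hf : Function.Injective f) (hg : Function.Surjective g) (hfg : Function.Exact f g) :
    Module.Flat R A := by
  rw [Module.Flat.iff_rTensor_preserves_injective_linearMap]
  intro N N' _ _ _ _ k hk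
  have h_comm : f.lTensor N' ∘ₗ k.rTensor A = k.rTensor B ∘ₗ f.lTensor N := by
    rw [lTensor_comp_rTensor, rTensor_comp_lTensor]
  have h_inj : Function.Injective (f.lTensor N' ∘ₗ k.rTensor A) := by
    rw [h_comm]
    exact (Module.Flat.rTensor_preserves_injective_linearMap k hk).comp
      (lTensor_injective_of_exact_of_flat g hg f hf hfg N)
  exact Function.Injective.of_comp h_inj

lemma exact_subtype_ker_rangeRestrict (f : A →ₗ[R] B) :
    Function.Exact (ker f).subtype f.rangeRestrict := by
  rw [exact_iff, ker_rangeRestrict, Submodule.range_subtype]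

end ShortExactSequences

section Cotorsion

variable {R : Type u} [CommRing R]

lemma extVanish_succ_iff (n : ℕ) (M N : Type u) [AddCommGroup M] [Module R M]
    [AddCommGroup N] [Module R N] :
    extVanish R (n + 1) M N ↔
      Subsingleton (Abelian.Ext (ModuleCat.of R M) (ModuleCat.of R N) (n + 1)) := by
  let P := projectiveResolution (ModuleCat.of R M)
  rw [subsingleton_abelianExt_succ_iff_forall_exists_coboundary P,
    ← subsingleton_leftDerivedExt_succ_iff_forall_exists_coboundary P _ _ R, extVanish]

lemma isCotorsion_iff_subsingleton_ext_one (C : Type u) [AddCommGroup C] [Module R C] :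
    IsCotorsion R C ↔ ∀ (F : Type u) [AddCommGroup F] [Module R F], Module.Flat R F →
      Subsingleton (Abelian.Ext (ModuleCat.of R F) (ModuleCat.of R C) 1) :=
  forall₃_congr fun F _ _ ↦ imp_congr_right fun _ ↦ extVanish_succ_iff 0 F C

lemma isCotorsion_of_subsingleton (C : Type u) [AddCommGroup C] [Module R C] [Subsingleton C] :
    IsCotorsion R C := by
  have : Injective (ModuleCat.of R C) := (ModuleCat.isZero_of_subsingleton _).injective
  rw [isCotorsion_iff_subsingleton_ext_one]
  exact fun F _ _ _ ↦ Abelian.Ext.subsingleton_of_injective _ _ 0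

lemma IsCotorsion.subsingleton_ext_succ {C : Type u} [AddCommGroup C] [Module R C]
    (hC : IsCotorsion R C) (n : ℕ) (F : Type u) [AddCommGroup F] [Module R F] [Module.Flat R F] :
    Subsingleton (Abelian.Ext (ModuleCat.of R F) (ModuleCat.of R C) (n + 1)) := by
  induction n generalizing F with
  | zero => exact (isCotorsion_iff_subsingleton_ext_one C).1 hC F ‹_›
  | succ n ih =>
    let S := (ModuleCat.of R F).projectiveShortComplex
    have hS : S.ShortExact := ModuleCat.shortExact_projectiveShortComplex _
    have : Module.Flat R S.X₂ := inferInstanceAs (Module.Flat R (F →₀ Shrink R))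
    have : Module.Flat R S.X₁ := flat_of_exact_of_flat (f := S.f.hom) (g := S.g.hom)
      hS.moduleCat_injective_f hS.moduleCat_surjective_g
      ((ShortComplex.ShortExact.moduleCat_exact_iff_function_exact S).1 hS.exact)
    have := ih S.X₁
    exact (precomp_extClass_surjective_of_projective_X₂ _ hS (n + 1)).subsingleton

variable {A B F : Type u} [AddCommGroup A] [Module R A] [AddCommGroup B] [Module R B]
  [AddCommGroup F] [Module R F] {f : A →ₗ[R] B} {g : B →ₗ[R] F}

lemma IsCotorsion.of_exact (hA : IsCotorsion R A) (hB : IsCotorsion R B)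
    (hf : Function.Injective f) (hg : Function.Surjective g) (hfg : Function.Exact f g) :
    IsCotorsion R F := by
  rw [isCotorsion_iff_subsingleton_ext_one]
  intro G _ _ _
  let S := ModuleCat.shortComplexOfCompEqZero f g hfg.linearMap_comp_eq_zero
  have hS : S.ShortExact := ModuleCat.shortComplex_shortExact S hfg hf hg
  have : Subsingleton (Abelian.Ext (ModuleCat.of R G) S.X₂ 1) := hB.subsingleton_ext_succ 0 G
  have : Subsingleton (Abelian.Ext (ModuleCat.of R G) S.X₁ 2) := hA.subsingleton_ext_succ 1 G
  exact subsingleton_ext_right_of_shortExact hS _ 1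

lemma IsCotorsion.exists_section_of_exact [Module.Flat R F] (hA : IsCotorsion R A)
    (hf : Function.Injective f) (hg : Function.Surjective g) (hfg : Function.Exact f g) :
    ∃ σ : F →ₗ[R] B, g ∘ₗ σ = LinearMap.id := by
  let S := ModuleCat.shortComplexOfCompEqZero f g hfg.linearMap_comp_eq_zero
  have hS : S.ShortExact := ModuleCat.shortComplex_shortExact S hfg hf hg
  have : Subsingleton (Abelian.Ext S.X₃ S.X₁ 1) := hA.subsingleton_ext_succ 0 F
  have := isSplitEpi_of_shortExact_of_subsingleton_ext_one hS
  exact ⟨(section_ S.g).hom, congrArg ModuleCat.Hom.hom (IsSplitEpi.id S.g)⟩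

end Cotorsion

section AcyclicComplexes

lemma exists_contraction_of_sections {R : Type*} [Ring R] {C : ℤ → Type*}
    [∀ i, AddCommGroup (C i)] [∀ i, Module R (C i)] {d : ∀ i : ℤ, C i →ₗ[R] C (i + 1)}
    (hacyc : ∀ i, ker (d (i + 1)) = range (d i)) (σ : ∀ i, range (d i) →ₗ[R] C i)
    (hσ : ∀ i, (d i).rangeRestrict ∘ₗ σ i = LinearMap.id) :
    ∃ s : ∀ i : ℤ, C (i + 1) →ₗ[R] C i,
      ∀ i, s (i + 1) ∘ₗ d (i + 1) + d i ∘ₗ s i = LinearMap.id := by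
  have hdσ (i : ℤ) (z : range (d i)) : d i (σ i z) = z :=
    congrArg Subtype.val (LinearMap.congr_fun (hσ i) z)
  -- The projection of `C (i + 1)` onto `range (d i)` along the image of `σ (i + 1)`.
  let π (i : ℤ) : C (i + 1) →ₗ[R] range (d i) :=
    (LinearMap.id - σ (i + 1) ∘ₗ (d (i + 1)).rangeRestrict).codRestrict (range (d i)) fun y ↦ by
      simp [← hacyc, hdσ]
  have hπ (i : ℤ) (y : C (i + 1)) :
      (π i y : C (i + 1)) = y - σ (i + 1) ((d (i + 1)).rangeRestrict y) := rfl
  have hπd (i : ℤ) : π i ∘ₗ d i = (d i).rangeRestrict := by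
    ext x
    have hdd : (d (i + 1)).rangeRestrict (d i x) = 0 := by
      rw [← mem_ker, ker_rangeRestrict, hacyc]
      exact mem_range_self _ x
    simp [hπ, hdd]
  refine ⟨fun i ↦ σ i ∘ₗ π i, fun i ↦ LinearMap.ext fun y ↦ ?_⟩
  calc σ (i + 1) ((π (i + 1) ∘ₗ d (i + 1)) y) + d i (σ i (π i y))
      = σ (i + 1) ((d (i + 1)).rangeRestrict y) +
          (y - σ (i + 1) ((d (i + 1)).rangeRestrict y)) := by rw [hπd, hdσ, hπ]
    _ = y := add_sub_cancel _ _

variable {R : Type u} [CommRing R] {C : ℤ → Type u} [∀ i, AddCommGroup (C i)]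
  [∀ i, Module R (C i)] {d : ∀ i : ℤ, C i →ₗ[R] C (i + 1)}

lemma exists_contraction_of_flat_of_isCotorsion_ker
    (hacyc : ∀ i, ker (d (i + 1)) = range (d i))
    (hflat : ∀ i, Module.Flat R (ker (d i))) (hcot : ∀ i, IsCotorsion R (ker (d i))) :
    ∃ s : ∀ i : ℤ, C (i + 1) →ₗ[R] C i,
      ∀ i, s (i + 1) ∘ₗ d (i + 1) + d i ∘ₗ s i = LinearMap.id := by
  have hsplit (i : ℤ) :
      ∃ σ : range (d i) →ₗ[R] C i, (d i).rangeRestrict ∘ₗ σ = LinearMap.id := by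
    have : Module.Flat R (range (d i)) := hacyc i ▸ hflat (i + 1)
    exact (hcot i).exists_section_of_exact (ker (d i)).subtype_injective
      (d i).surjective_rangeRestrict (exact_subtype_ker_rangeRestrict (d i))
  choose σ hσ using hsplit
  exact exists_contraction_of_sections hacyc σ hσ

lemma flat_ker_of_bddAbove (hacyc : ∀ i, ker (d (i + 1)) = range (d i))
    (hflat : ∀ i, Module.Flat R (C i)) {b : ℤ} (hb : ∀ i, b < i → Subsingleton (C i)) (i : ℤ) :
    Module.Flat R (ker (d i)) := by
  have descend (j : ℤ) (hj : Module.Flat R (ker (d (j + 1)))) : Module.Flat R (ker (d j)) := by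
    rw [hacyc] at hj
    exact flat_of_exact_of_flat (ker (d j)).subtype_injective (d j).surjective_rangeRestrict
      (exact_subtype_ker_rangeRestrict (d j))
  have above (j : ℤ) (hj : b < j) : Module.Flat R (ker (d j)) := by
    have := hb j hj
    infer_instance
  induction i using Int.inductionOn' (b := b + 1) with
  | zero => exact above _ (lt_add_one b)
  | succ j hj _ => exact above _ (by lia)
  | pred j _ ih => exact descend _ (by rwa [sub_add_cancel])

lemma isCotorsion_ker_of_bddBelow (hacyc : ∀ i, ker (d (i + 1)) = range (d i))
    (hcot : ∀ i, IsCotorsion R (C i)) {a : ℤ} (ha : ∀ i, i < a → Subsingleton (C i)) (i : ℤ) :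
    IsCotorsion R (ker (d i)) := by
  have ascend (j : ℤ) (hj : IsCotorsion R (ker (d j))) : IsCotorsion R (ker (d (j + 1))) := by
    rw [hacyc]
    exact hj.of_exact (hcot j) (ker (d j)).subtype_injective (d j).surjective_rangeRestrict
      (exact_subtype_ker_rangeRestrict (d j))
  have below (j : ℤ) (hj : j < a) : IsCotorsion R (ker (d j)) := by
    have := ha j hj
    exact isCotorsion_of_subsingleton _
  induction i using Int.inductionOn' (b := a - 1) with
  | zero => exact below _ (sub_one_lt a)
  | succ j _ ih => exact ascend j ih
  | pred j hj _ => exact below _ (by lia)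

end AcyclicComplexes

theorem bounded_acyclic_flat_cotorsion_complex_contractible_general (R : Type u) [CommRing R]
    (C : ℤ → Type u) [∀ i, AddCommGroup (C i)] [∀ i, Module R (C i)]
    (d : ∀ i : ℤ, C i →ₗ[R] C (i + 1))
    (hbdd : ∃ a b : ℤ, ∀ i, (i < a ∨ b < i) → Subsingleton (C i))
    (hacyc : ∀ i, LinearMap.ker (d (i + 1)) = LinearMap.range (d i))
    (hflat : ∀ i, Module.Flat R (C i))
    (hcot : ∀ i, IsCotorsion R (C i)) :
    ∃ s : ∀ i : ℤ, C (i + 1) →ₗ[R] C i,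
      ∀ i, (s (i + 1)).comp (d (i + 1)) + (d i).comp (s i) = LinearMap.id := by
  obtain ⟨a, b, hab⟩ := hbdd
  have hZflat := flat_ker_of_bddAbove hacyc hflat fun i hi ↦ hab i (Or.inr hi)
  have hZcot := isCotorsion_ker_of_bddBelow hacyc hcot fun i hi ↦ hab i (Or.inl hi)
  exact exists_contraction_of_flat_of_isCotorsion_ker hacyc hZflat hZcot

/-- over a ring where every flat module has cotorsion dimension at most
`n`, every bounded acyclic complex of flat modules with cotorsion components is
contractible. -/
theorem bounded_acyclic_flat_cotorsion_complex_contractible (R : Type u) [CommRing R]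
    (n : ℕ)
    (hcd : ∀ (F : Type u) [AddCommGroup F] [Module R F], Module.Flat R F →
      cotorsionDimLE R F n)
    (C : ℤ → Type u) [∀ i, AddCommGroup (C i)] [∀ i, Module R (C i)]
    (d : ∀ i : ℤ, C i →ₗ[R] C (i + 1))
    (hbdd : ∃ a b : ℤ, ∀ i, (i < a ∨ b < i) → Subsingleton (C i))
    (hacyc : ∀ i, LinearMap.ker (d (i + 1)) = LinearMap.range (d i))
    (hflat : ∀ i, Module.Flat R (C i))
    (hcot : ∀ i, IsCotorsion R (C i)) :
    ∃ s : ∀ i : ℤ, C (i + 1) →ₗ[R] C i,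
      ∀ i, (s (i + 1)).comp (d (i + 1)) + (d i).comp (s i) = LinearMap.id :=
  bounded_acyclic_flat_cotorsion_complex_contractible_general R C d hbdd hacyc hflat hcot
end

section
/- Let R be a commutative ring and E^• a complex of pure injective R-modules that is pure acyclic (acyclic with all syzygies such that each short exact sequence of cycles is pure). Then E^• is contractible. -/
open CategoryTheory

universe u

/-!
If `Hom(A, E)` is acyclic for every module `A`, then the inclusion of the cycles `Z^{i+1} ⊆ E^{i+1}`
lifts to `E^i`, and these lifts contract `E`. Acyclicity is proved by induction on the number of
relations in a presentation of `A`. If it is finite, a lift exists because finite systems of linear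
equations that are solvable in `E` are solvable in the pure submodules of cycles. If it is infinite,
`A` is the colimit of a well-ordered chain of modules `A_a` with fewer relations. Then
`A = (⨁ A_a) / K`, where `K` is pure and is the union of a well-ordered chain of direct summands
of `⨁ A_a`. Since two lifts of a cocycle differ by a coboundary, and coboundaries extend along pure
monomorphisms by pure injectivity, lifts can be built transfinitely along the chain, which gives
acyclicity first for `K` and then for `A`.
-/

section Extension

variable {R A M N : Type*} [Ring R] [AddCommGroup A] [Module R A] [AddCommGroup M] [Module R M]
  [AddCommGroup N] [Module R N]

/-- The partial lifts of `f : A → N` along `φ : M → N` whose domain is generated by members of a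
family `𝓑` of submodules of `A`. They are partially ordered by extension; the condition on the
domain passes to unions of chains. -/
def partialLifts (φ : M →ₗ[R] N) (f : A →ₗ[R] N) (𝓑 : Set (Submodule R A)) :
    Set (A →ₗ.[R] M) :=
  {g | (∀ x : g.domain, φ (g x) = f x) ∧ g.domain ≤ sSup {V ∈ 𝓑 | V ≤ g.domain}}

lemma bot_mem_partialLifts (φ : M →ₗ[R] N) (f : A →ₗ[R] N) (𝓑 : Set (Submodule R A)) :
    ⊥ ∈ partialLifts φ f 𝓑 := by
  refine ⟨?_, bot_le⟩
  rintro ⟨x, hx⟩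
  obtain rfl : x = 0 := (Submodule.mem_bot R).1 hx
  exact (congrArg φ (LinearPMap.map_zero _)).trans (by simp)

lemma sSup_mem_partialLifts {φ : M →ₗ[R] N} {f : A →ₗ[R] N} {𝓑 : Set (Submodule R A)}
    {c : Set (A →ₗ.[R] M)} (hc : c ⊆ partialLifts φ f 𝓑) (hdir : DirectedOn (· ≤ ·) c)
    (hne : c.Nonempty) : LinearPMap.sSup c hdir ∈ partialLifts φ f 𝓑 := by
  constructor
  · rintro ⟨x, hx⟩
    obtain ⟨g, hg, hxg⟩ := (LinearPMap.mem_domain_sSup_iff hne hdir).1 hx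
    rw [LinearPMap.sSup_apply hdir hg ⟨x, hxg⟩]
    exact (hc hg).1 ⟨x, hxg⟩
  · rw [LinearPMap.domain_sSup]
    refine sSup_le ?_
    rintro _ ⟨g, hg, rfl⟩
    have hle : g.domain ≤ sSup (LinearPMap.domain '' c) := le_sSup ⟨g, hg, rfl⟩
    exact (hc hg).2.trans (sSup_le_sSup fun V hV => ⟨hV.1, hV.2.trans hle⟩)

lemma exists_maximal_mem_partialLifts (φ : M →ₗ[R] N) (f : A →ₗ[R] N)
    (𝓑 : Set (Submodule R A)) : ∃ m, Maximal (· ∈ partialLifts φ f 𝓑) m := by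
  obtain ⟨m, -, hm⟩ := zorn_le_nonempty₀ (partialLifts φ f 𝓑)
    (fun c hc hchain g hg => ⟨LinearPMap.sSup c hchain.directedOn,
      sSup_mem_partialLifts hc hchain.directedOn ⟨g, hg⟩,
      fun _ hz => LinearPMap.le_sSup hchain.directedOn hz⟩)
    ⊥ (bot_mem_partialLifts φ f 𝓑)
  exact ⟨m, hm⟩

theorem exists_lift_sSup_of_extend {φ : M →ₗ[R] N} {f : A →ₗ[R] N} {𝓑 : Set (Submodule R A)}
    (hchain : IsChain (· ≤ ·) 𝓑) (hwf : 𝓑.IsWF)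
    (hext : ∀ V ∈ 𝓑, ∀ g : ↥(sSup {W ∈ 𝓑 | W < V}) →ₗ[R] M,
      φ ∘ₗ g = f ∘ₗ Submodule.subtype _ →
      ∃ g' : V →ₗ[R] M, φ ∘ₗ g' = f ∘ₗ V.subtype ∧
        g' ∘ₗ Submodule.inclusion (sSup_le fun _ hW => hW.2.le) = g) :
    ∃ g : ↥(sSup 𝓑) →ₗ[R] M, φ ∘ₗ g = f ∘ₗ (sSup 𝓑).subtype := by
  obtain ⟨⟨D, g⟩, ⟨hg, hD⟩, hmax⟩ := exists_maximal_mem_partialLifts φ f 𝓑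
  have hle : ∀ V ∈ 𝓑, V ≤ D := by
    intro V hV
    refine Set.WellFoundedOn.induction hwf hV (P := (· ≤ D)) fun V hV ih => ?_
    by_contra hVD
    have hlt : ∀ W ∈ 𝓑, W ≤ D → W < V := fun W hW hWD =>
      ((hchain.total hW hV).resolve_right fun h => hVD (h.trans hWD)).lt_of_ne
        (by rintro rfl; exact hVD hWD)
    have hDle : D ≤ sSup {W ∈ 𝓑 | W < V} :=
      hD.trans (sSup_le_sSup fun W hW => ⟨hW.1, hlt W hW.1 hW.2⟩)
    obtain rfl : D = sSup {W ∈ 𝓑 | W < V} :=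
      hDle.antisymm (sSup_le fun W hW => ih W hW.1 hW.2)
    obtain ⟨g', hg', hgg'⟩ := hext V hV g (LinearMap.ext hg)
    have hmem : (⟨V, g'⟩ : A →ₗ.[R] M) ∈ partialLifts φ f 𝓑 :=
      ⟨LinearMap.congr_fun hg', le_sSup ⟨hV, le_rfl⟩⟩
    refine hVD (hmax hmem ⟨sSup_le fun _ hW => hW.2.le, ?_⟩).1
    rintro x ⟨_, hy⟩ rfl
    exact (LinearMap.congr_fun hgg' x).symm
  exact ⟨g ∘ₗ Submodule.inclusion (sSup_le hle), LinearMap.ext fun x => hg ⟨x, sSup_le hle x.2⟩⟩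

end Extension

section Purity

variable {R : Type u} [CommRing R] {A B : Type u} [AddCommGroup A] [Module R A]
  [AddCommGroup B] [Module R B]

lemma isPureMono_of_comp_eq_id {f : A →ₗ[R] B} {r : B →ₗ[R] A} (h : r ∘ₗ f = LinearMap.id) :
    IsPureMono R f := by
  refine ⟨Function.LeftInverse.injective (LinearMap.congr_fun h), fun P _ _ => ?_⟩
  refine Function.LeftInverse.injective (g := r.rTensor P) fun x => ?_
  rw [← LinearMap.comp_apply, ← LinearMap.rTensor_comp, h, LinearMap.rTensor_id,
    LinearMap.id_apply]

lemma IsPureMono.of_comp {C : Type u} [AddCommGroup C] [Module R C] {f : A →ₗ[R] B}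
    {g : B →ₗ[R] C} (h : IsPureMono R (g ∘ₗ f)) : IsPureMono R f := by
  refine ⟨.of_comp (f := g) h.1, fun P _ _ => .of_comp (f := g.rTensor P) ?_⟩
  rw [← LinearMap.coe_comp, ← LinearMap.rTensor_comp]
  exact h.2 P

lemma exists_rTensor_inclusion_eq {𝓑 : Set (Submodule R A)} (hdir : DirectedOn (· ≤ ·) 𝓑)
    (hne : 𝓑.Nonempty) (P : Type*) [AddCommGroup P] [Module R P]
    (x : TensorProduct R ↥(sSup 𝓑) P) :
    ∃ V, ∃ hV : V ∈ 𝓑, ∃ y : TensorProduct R V P,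
      (Submodule.inclusion (le_sSup hV)).rTensor P y = x := by
  induction x with
  | zero =>
    obtain ⟨V, hV⟩ := hne
    exact ⟨V, hV, 0, map_zero _⟩
  | tmul a p =>
    obtain ⟨V, hV, ha⟩ := (Submodule.mem_sSup_of_directed hne hdir).1 a.2
    exact ⟨V, hV, TensorProduct.tmul R ⟨a, ha⟩ p, rfl⟩
  | add x₁ x₂ ih₁ ih₂ =>
    obtain ⟨V₁, hV₁, y₁, rfl⟩ := ih₁
    obtain ⟨V₂, hV₂, y₂, rfl⟩ := ih₂
    obtain ⟨V, hV, h₁, h₂⟩ := hdir V₁ hV₁ V₂ hV₂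
    refine ⟨V, hV, (Submodule.inclusion h₁).rTensor P y₁ +
      (Submodule.inclusion h₂).rTensor P y₂, ?_⟩
    rw [map_add, ← LinearMap.rTensor_comp_apply, ← LinearMap.rTensor_comp_apply]
    rfl

lemma isPureMono_subtype_sSup {𝓑 : Set (Submodule R A)} (hdir : DirectedOn (· ≤ ·) 𝓑)
    (hpure : ∀ V ∈ 𝓑, IsPureMono R V.subtype) : IsPureMono R (sSup 𝓑).subtype := by
  rcases 𝓑.eq_empty_or_nonempty with rfl | hne
  · rw [sSup_empty]
    exact isPureMono_of_comp_eq_id (r := 0) (Subsingleton.elim _ _)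
  refine ⟨Submodule.subtype_injective _, fun P _ _ => (injective_iff_map_eq_zero _).2 ?_⟩
  intro x hx
  obtain ⟨V, hV, y, rfl⟩ := exists_rTensor_inclusion_eq hdir hne P x
  rw [← LinearMap.rTensor_comp_apply, Submodule.subtype_comp_inclusion] at hx
  rw [(injective_iff_map_eq_zero _).1 ((hpure V hV).2 P) y hx, map_zero]

end Purity

section LinearSystems

lemma linearCombination_comm {S X : Type*} [CommSemiring S] (p q : X →₀ S) :
    Finsupp.linearCombination S p q = Finsupp.linearCombination S q p := by
  classical
  have expand (p q : X →₀ S) :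
      Finsupp.linearCombination S p q = ∑ x ∈ p.support ∪ q.support, q x * p x :=
    Finsupp.sum_of_support_subset q Finset.subset_union_right _ (by simp)
  simp only [expand, Finset.union_comm q.support, mul_comm]

variable {R ι X A : Type*} [CommRing R] [AddCommGroup A] [Module R A]

/-- The transpose of the linear system with left-hand sides `t j`, `j : ι`, in unknowns indexed
by `X`. Its cokernel carries the obstruction to solving the system. -/
noncomputable def transposeSystem (t : ι → X →₀ R) : (X →₀ R) →ₗ[R] ι → R :=
  LinearMap.pi fun j => Finsupp.linearCombination R (t j)

lemma transposeSystem_apply (t : ι → X →₀ R) (p : X →₀ R) (j : ι) :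
    transposeSystem t p j = Finsupp.linearCombination R p (t j) :=
  linearCombination_comm (t j) p

variable [DecidableEq ι]

lemma sum_smul_mkQ_single [Fintype ι] (N : Submodule R (ι → R)) (c : ι → R) :
    ∑ j, c j • N.mkQ (Pi.single j 1) = N.mkQ c := by
  simp only [← map_smul, ← map_sum, ← pi_eq_sum_univ']

lemma span_range_mkQ_single [Finite ι] (N : Submodule R (ι → R)) :
    Submodule.span R (Set.range fun j => N.mkQ (Pi.single j 1)) = ⊤ := by
  have := Fintype.ofFinite ι
  refine Submodule.eq_top_iff'.2 (N.mkQ_surjective.forall.2 fun c => ?_)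
  rw [← sum_smul_mkQ_single]
  exact sum_mem fun j _ => Submodule.smul_mem _ _ (Submodule.subset_span ⟨j, rfl⟩)

variable [Fintype ι]

lemma sum_mkQ_single_tmul_eq_zero (t : ι → X →₀ R) (u : (X →₀ R) →ₗ[R] A) :
    ∑ j, TensorProduct.tmul R ((LinearMap.range (transposeSystem t)).mkQ (Pi.single j 1))
      (u (t j)) = 0 := by
  classical
  let S : Finset X := Finset.univ.biUnion fun j => (t j).support
  refine TensorProduct.sum_tmul_eq_zero_of_vanishesTrivially R
    (.of_fintype (κ := S) (fun j x => t j x) (fun x => u (Finsupp.single x 1)) ?_ ?_)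
  · intro j
    have hsupp : (t j).support ⊆ S :=
      Finset.subset_biUnion_of_mem (fun j => (t j).support) (Finset.mem_univ j)
    have hu : u = Finsupp.linearCombination R fun x => u (Finsupp.single x 1) := by ext; simp
    calc u (t j) = ∑ x ∈ S, t j x • u (Finsupp.single x 1) :=
          (LinearMap.congr_fun hu _).trans (Finsupp.sum_of_support_subset _ hsupp _ (by simp))
      _ = _ := (Finset.sum_coe_sort S fun x => t j x • u (Finsupp.single x 1)).symm
  · rintro ⟨x, -⟩
    rw [sum_smul_mkQ_single, ← LinearMap.mem_ker, Submodule.ker_mkQ]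
    exact ⟨Finsupp.single x 1, by ext j; simp [transposeSystem]⟩

theorem exists_forall_apply_eq_iff_sum_tmul_eq_zero (t : ι → X →₀ R) (a : ι → A) :
    (∃ u : (X →₀ R) →ₗ[R] A, ∀ j, u (t j) = a j) ↔
      ∑ j, TensorProduct.tmul R ((LinearMap.range (transposeSystem t)).mkQ (Pi.single j 1))
        (a j) = 0 := by
  refine ⟨fun ⟨u, hu⟩ => ?_, fun h => ?_⟩
  · simpa only [hu] using sum_mkQ_single_tmul_eq_zero t u
  obtain ⟨k, c, y, hay, hc⟩ :=
    TensorProduct.vanishesTrivially_of_sum_tmul_eq_zero R (span_range_mkQ_single _) h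
  have hcol (l : Fin k) : ∃ p, transposeSystem t p = fun j => c j l := by
    rw [← LinearMap.mem_range, ← Submodule.ker_mkQ (LinearMap.range (transposeSystem t)),
      LinearMap.mem_ker, ← sum_smul_mkQ_single, hc]
  choose p hp using hcol
  refine ⟨∑ l, LinearMap.toSpanSingleton R A (y l) ∘ₗ Finsupp.linearCombination R (p l),
    fun j => ?_⟩
  simp only [LinearMap.sum_apply, LinearMap.comp_apply, ← transposeSystem_apply, hp]
  simp [hay]

end LinearSystems

theorem IsPureMono.exists_forall_apply_eq {R A B : Type u} [CommRing R] [AddCommGroup A]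
    [Module R A] [AddCommGroup B] [Module R B] {ι : Type} [Finite ι] {X : Type*} {f : A →ₗ[R] B}
    (hf : IsPureMono R f) (t : ι → X →₀ R) (g : (X →₀ R) →ₗ[R] B) (a : ι → A)
    (hg : ∀ j, g (t j) = f (a j)) : ∃ u : (X →₀ R) →ₗ[R] A, ∀ j, u (t j) = a j := by
  classical
  have := Fintype.ofFinite ι
  refine (exists_forall_apply_eq_iff_sum_tmul_eq_zero t a).2 ?_
  apply (LinearMap.lTensor_inj_iff_rTensor_inj _ _).2 (hf.2 _)
  simpa using (exists_forall_apply_eq_iff_sum_tmul_eq_zero t (f ∘ a)).1 ⟨g, hg⟩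

section HomAcyclic

variable {R : Type*} [Ring R] {E : ℤ → Type*} [∀ i, AddCommGroup (E i)] [∀ i, Module R (E i)]

/-- Acyclicity of the complex `Hom(A, E)`, where `(E, d)` is a complex: every cocycle
`A → E (i + 1)` is a coboundary. -/
def HomAcyclic (d : ∀ i, E i →ₗ[R] E (i + 1)) (A : Type*) [AddCommGroup A] [Module R A] : Prop :=
  ∀ i (f : A →ₗ[R] E (i + 1)), d (i + 1) ∘ₗ f = 0 → ∃ g : A →ₗ[R] E i, d i ∘ₗ g = f

variable {d : ∀ i, E i →ₗ[R] E (i + 1)}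

lemma HomAcyclic.of_retract {A C : Type*} [AddCommGroup A] [Module R A] [AddCommGroup C]
    [Module R C] (hA : HomAcyclic d A) {s : C →ₗ[R] A} {r : A →ₗ[R] C}
    (hrs : r ∘ₗ s = LinearMap.id) : HomAcyclic d C := by
  intro i f hf
  obtain ⟨g, hg⟩ := hA i (f ∘ₗ r) (by rw [← LinearMap.comp_assoc, hf, LinearMap.zero_comp])
  exact ⟨g ∘ₗ s, by rw [← LinearMap.comp_assoc, hg, LinearMap.comp_assoc, hrs, LinearMap.comp_id]⟩

lemma HomAcyclic.of_linearEquiv {A C : Type*} [AddCommGroup A] [Module R A] [AddCommGroup C]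
    [Module R C] (hA : HomAcyclic d A) (e : A ≃ₗ[R] C) : HomAcyclic d C :=
  hA.of_retract (s := e.symm.toLinearMap) (r := e.toLinearMap) (LinearMap.ext e.apply_symm_apply)

lemma HomAcyclic.directSum {ι : Type*} {M : ι → Type*} [∀ a, AddCommGroup (M a)]
    [∀ a, Module R (M a)] (hM : ∀ a, HomAcyclic d (M a)) : HomAcyclic d (DirectSum ι M) := by
  classical
  intro i f hf
  choose g hg using fun a => hM a i (f ∘ₗ DirectSum.lof R ι M a)
    (by rw [← LinearMap.comp_assoc, hf, LinearMap.zero_comp])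
  refine ⟨DirectSum.toModule R ι _ g, DirectSum.linearMap_ext R fun a => ?_⟩
  ext x
  simp [← hg]

theorem exists_contraction_of_homAcyclic_ker (hd : ∀ i, d (i + 1) ∘ₗ d i = 0)
    (h : ∀ i, HomAcyclic d (LinearMap.ker (d i))) :
    ∃ s : ∀ i, E (i + 1) →ₗ[R] E i,
      ∀ i, s (i + 1) ∘ₗ d (i + 1) + d i ∘ₗ s i = LinearMap.id := by
  choose σ hσ using fun i => h (i + 1) i (LinearMap.ker (d (i + 1))).subtype
    (LinearMap.comp_ker_subtype _)
  have hdσ (i : ℤ) (x : LinearMap.ker (d (i + 1))) : d i (σ i x) = x :=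
    LinearMap.congr_fun (hσ i) x
  let δ (i : ℤ) : E i →ₗ[R] LinearMap.ker (d (i + 1)) :=
    (d i).codRestrict _ (LinearMap.congr_fun (hd i))
  have hδ (i : ℤ) (x : E i) : (δ i x : E (i + 1)) = d i x := rfl
  let ρ (i : ℤ) : E (i + 1) →ₗ[R] LinearMap.ker (d (i + 1)) :=
    (LinearMap.id - σ (i + 1) ∘ₗ δ (i + 1)).codRestrict _ fun x => by simp [hdσ, hδ]
  refine ⟨fun i => σ i ∘ₗ ρ i, fun i => LinearMap.ext fun x => ?_⟩
  have hρ : ρ (i + 1) (d (i + 1) x) = δ (i + 1) x := by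
    have : δ (i + 1 + 1) (d (i + 1) x) = 0 := Subtype.ext (LinearMap.congr_fun (hd _) x)
    exact Subtype.ext (by simp [ρ, this, hδ])
  simp [hρ, hdσ, ρ]

end HomAcyclic

section PureInjective

variable {R : Type u} [CommRing R] {E : ℤ → Type u} [∀ i, AddCommGroup (E i)]
  [∀ i, Module R (E i)] {d : ∀ i, E i →ₗ[R] E (i + 1)} {A B : Type u} [AddCommGroup A]
  [Module R A] [AddCommGroup B] [Module R B]

/- Two lifts of `f ∘ j` differ by a cocycle, hence by a coboundary `d h`, and `h` extends along
`j`. -/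
lemma HomAcyclic.exists_extend (hd : ∀ i, d (i + 1) ∘ₗ d i = 0)
    (hpinj : ∀ i, IsPureInjective R (E i)) {j : A →ₗ[R] B} (hj : IsPureMono R j)
    (hA : HomAcyclic d A) (hB : HomAcyclic d B) {i : ℤ} {f : B →ₗ[R] E (i + 1)}
    (hf : d (i + 1) ∘ₗ f = 0) {g : A →ₗ[R] E i} (hg : d i ∘ₗ g = f ∘ₗ j) :
    ∃ g' : B →ₗ[R] E i, d i ∘ₗ g' = f ∧ g' ∘ₗ j = g := by
  obtain ⟨i, rfl⟩ : ∃ k, i = k + 1 := ⟨i - 1, (sub_add_cancel i 1).symm⟩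
  obtain ⟨k, hk⟩ := hB _ f hf
  have hkg : d (i + 1) ∘ₗ (k ∘ₗ j - g) = 0 := by
    rw [LinearMap.comp_sub, hg, ← LinearMap.comp_assoc, hk, sub_self]
  obtain ⟨h, hh⟩ := hA i _ hkg
  obtain ⟨h', rfl⟩ := hpinj i j hj h
  refine ⟨k - d i ∘ₗ h', ?_, ?_⟩
  · rw [LinearMap.comp_sub, hk, ← LinearMap.comp_assoc, hd, LinearMap.zero_comp, sub_zero]
  · rw [LinearMap.sub_comp, LinearMap.comp_assoc, hh, sub_sub_cancel]

lemma HomAcyclic.quotient (hd : ∀ i, d (i + 1) ∘ₗ d i = 0)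
    (hpinj : ∀ i, IsPureInjective R (E i)) {K : Submodule R A} (hK : IsPureMono R K.subtype)
    (hKd : HomAcyclic d K) (hA : HomAcyclic d A) : HomAcyclic d (A ⧸ K) := by
  intro i f hf
  have hfK : (f ∘ₗ K.mkQ) ∘ₗ K.subtype = 0 :=
    LinearMap.ext fun x => by simp [(Submodule.Quotient.mk_eq_zero K).2 x.2]
  obtain ⟨g, hg, hgK⟩ := hKd.exists_extend hd hpinj hK hA (f := f ∘ₗ K.mkQ) (g := 0)
    (by rw [← LinearMap.comp_assoc, hf, LinearMap.zero_comp])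
    (by rw [hfK, LinearMap.comp_zero])
  refine ⟨K.liftQ g fun x hx => LinearMap.congr_fun hgK ⟨x, hx⟩, ?_⟩
  exact Submodule.linearMap_qext _ hg

lemma homAcyclic_sSup_of_lt (hd : ∀ i, d (i + 1) ∘ₗ d i = 0)
    (hpinj : ∀ i, IsPureInjective R (E i)) {𝓑 : Set (Submodule R A)} (hchain : IsChain (· ≤ ·) 𝓑)
    (hwf : 𝓑.IsWF) (hpure : ∀ V ∈ 𝓑, IsPureMono R V.subtype) (h𝓑 : ∀ V ∈ 𝓑, HomAcyclic d V)
    (hlt : ∀ V ∈ 𝓑, HomAcyclic d ↥(sSup {W ∈ 𝓑 | W < V})) : HomAcyclic d ↥(sSup 𝓑) := by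
  intro i f hf
  obtain ⟨f, rfl⟩ := hpinj (i + 1) _ (isPureMono_subtype_sSup hchain.directedOn hpure) f
  refine exists_lift_sSup_of_extend hchain hwf fun V hV g hg => ?_
  have hsub : {W ∈ 𝓑 | W < V} ⊆ 𝓑 := Set.sep_subset _ _
  have hle : sSup {W ∈ 𝓑 | W < V} ≤ V := sSup_le fun _ hW => hW.2.le
  have hinc : IsPureMono R (Submodule.inclusion hle) := .of_comp (g := V.subtype) <|
    isPureMono_subtype_sSup (hchain.mono hsub).directedOn fun W hW => hpure W (hsub hW)
  refine (hlt V hV).exists_extend hd hpinj hinc (h𝓑 V hV) ?_ hg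
  exact LinearMap.ext fun x => LinearMap.congr_fun hf (Submodule.inclusion (le_sSup hV) x)

theorem homAcyclic_sSup (hd : ∀ i, d (i + 1) ∘ₗ d i = 0)
    (hpinj : ∀ i, IsPureInjective R (E i)) {𝓑 : Set (Submodule R A)} (hchain : IsChain (· ≤ ·) 𝓑)
    (hwf : 𝓑.IsWF) (hpure : ∀ V ∈ 𝓑, IsPureMono R V.subtype) (h𝓑 : ∀ V ∈ 𝓑, HomAcyclic d V) :
    HomAcyclic d ↥(sSup 𝓑) := by
  refine homAcyclic_sSup_of_lt hd hpinj hchain hwf hpure h𝓑 fun V hV => ?_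
  refine Set.WellFoundedOn.induction hwf hV
    (P := fun V => HomAcyclic d ↥(sSup {W ∈ 𝓑 | W < V})) fun V _ ih => ?_
  have hsub : {W ∈ 𝓑 | W < V} ⊆ 𝓑 := Set.sep_subset _ _
  refine homAcyclic_sSup_of_lt hd hpinj (hchain.mono hsub) (hwf.mono hsub)
    (fun W hW => hpure W (hsub hW)) (fun W hW => h𝓑 W (hsub hW)) fun W hW => ?_
  have hseg : {U ∈ {U ∈ 𝓑 | U < V} | U < W} = {U ∈ 𝓑 | U < W} := by
    ext U
    exact ⟨fun hU => ⟨hU.1.1, hU.2⟩, fun hU => ⟨⟨hU.1, hU.2.trans hW.2⟩, hU.2⟩⟩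
  rw [hseg]
  exact ih W hW.1 hW.2

end PureInjective

section DirectLimit

variable {R ι : Type*} [Ring R] [LinearOrder ι] {M : ι → Type*} [∀ a, AddCommGroup (M a)]
  [∀ a, Module R (M a)]

/-- The endomorphism of the direct sum of a chain of modules that pushes all the components of
index at most `b` into the component `b`. Its kernel consists of relations of the direct limit
of the chain, and each relation is in its kernel for large `b`. -/
noncomputable def collapse (f : ∀ a b, a ≤ b → M a →ₗ[R] M b) (b : ι) :
    Module.End R (DirectSum ι M) :=
  DirectSum.toModule R ι _ fun a =>
    if h : a ≤ b then DirectSum.lof R ι M b ∘ₗ f a b h else DirectSum.lof R ι M a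

variable (f : ∀ a b, a ≤ b → M a →ₗ[R] M b)

lemma collapse_lof_of_le {a b : ι} (h : a ≤ b) (x : M a) :
    collapse f b (DirectSum.lof R ι M a x) = DirectSum.lof R ι M b (f a b h x) := by
  simp [collapse, h]

lemma collapse_lof_of_lt {a b : ι} (h : b < a) (x : M a) :
    collapse f b (DirectSum.lof R ι M a x) = DirectSum.lof R ι M a x := by
  simp [collapse, h.not_ge]

lemma toModule_of_comp_collapse (b : ι) :
    DirectSum.toModule R ι _ (Module.DirectLimit.of R ι M f) ∘ₗ collapse f b =
      DirectSum.toModule R ι _ (Module.DirectLimit.of R ι M f) := by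
  refine DirectSum.linearMap_ext R fun a => LinearMap.ext fun x => ?_
  simp only [LinearMap.comp_apply]
  rcases le_or_gt a b with hab | hba
  · rw [collapse_lof_of_le f hab, DirectSum.toModule_lof, DirectSum.toModule_lof,
      Module.DirectLimit.of_f]
  · rw [collapse_lof_of_lt f hba]

variable [DirectedSystem M (f · · ·)]

lemma collapse_comp_collapse {b c : ι} (hbc : b ≤ c) :
    collapse f c ∘ₗ collapse f b = collapse f c := by
  refine DirectSum.linearMap_ext R fun a => LinearMap.ext fun x => ?_
  simp only [LinearMap.comp_apply]
  rcases le_or_gt a b with hab | hba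
  · rw [collapse_lof_of_le f hab, collapse_lof_of_le f hbc, collapse_lof_of_le f (hab.trans hbc),
      DirectedSystem.map_map' f]
  · rw [collapse_lof_of_lt f hba]

lemma ker_collapse_mono : Monotone fun b => LinearMap.ker (collapse f b) := by
  intro b c hbc
  simpa only [collapse_comp_collapse f hbc] using
    LinearMap.ker_le_ker_comp (collapse f b) (collapse f c)

lemma exists_retraction_ker_collapse (b : ι) :
    ∃ r : DirectSum ι M →ₗ[R] LinearMap.ker (collapse f b),
      r ∘ₗ (LinearMap.ker (collapse f b)).subtype = LinearMap.id :=
  ⟨_, Submodule.projectionOnto_comp_subtype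
    (LinearMap.IsIdempotentElem.isCompl (collapse_comp_collapse f le_rfl)).symm⟩

lemma exists_collapse_eq_lof [Nonempty ι] (x : DirectSum ι M) :
    ∃ b y, collapse f b x = DirectSum.lof R ι M b y := by
  induction x using DirectSum.induction_on with
  | zero => exact ⟨Classical.arbitrary ι, 0, by simp only [map_zero]⟩
  | of a x => exact ⟨a, _, collapse_lof_of_le f le_rfl x⟩
  | add x₁ x₂ ih₁ ih₂ =>
    obtain ⟨b₁, y₁, h₁⟩ := ih₁
    obtain ⟨b₂, y₂, h₂⟩ := ih₂
    have hle₁ : b₁ ≤ b₁ ⊔ b₂ := le_sup_left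
    have hle₂ : b₂ ≤ b₁ ⊔ b₂ := le_sup_right
    refine ⟨b₁ ⊔ b₂, f b₁ _ hle₁ y₁ + f b₂ _ hle₂ y₂, ?_⟩
    rw [map_add, map_add, ← collapse_lof_of_le f hle₁, ← collapse_lof_of_le f hle₂, ← h₁, ← h₂,
      ← LinearMap.comp_apply, ← LinearMap.comp_apply, collapse_comp_collapse f hle₁,
      collapse_comp_collapse f hle₂]

lemma ker_toModule_of_eq_sSup [Nonempty ι] :
    LinearMap.ker (DirectSum.toModule R ι _ (Module.DirectLimit.of R ι M f)) =
      sSup (Set.range fun b => LinearMap.ker (collapse f b)) := by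
  apply le_antisymm
  · intro x hx
    obtain ⟨b, y, hy⟩ := exists_collapse_eq_lof f x
    have hy0 : Module.DirectLimit.of R ι M f b y = 0 := by
      rw [← DirectSum.toModule_lof R, ← hy, ← LinearMap.comp_apply, toModule_of_comp_collapse]
      exact hx
    obtain ⟨c, hbc, hc⟩ := Module.DirectLimit.of.zero_exact hy0
    have hxc : collapse f c x = 0 := by
      rw [← collapse_comp_collapse f hbc, LinearMap.comp_apply, hy, collapse_lof_of_le f hbc, hc,
        map_zero]
    exact le_sSup (a := LinearMap.ker (collapse f c)) (Set.mem_range_self c) hxc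
  · refine sSup_le ?_
    rintro _ ⟨b, rfl⟩
    simpa only [toModule_of_comp_collapse] using
      LinearMap.ker_le_ker_comp (collapse f b)
        (DirectSum.toModule R ι _ (Module.DirectLimit.of R ι M f))

end DirectLimit

section Colimit

variable {R : Type u} [CommRing R] {E : ℤ → Type u} [∀ i, AddCommGroup (E i)]
  [∀ i, Module R (E i)] {d : ∀ i, E i →ₗ[R] E (i + 1)} {ι : Type u} [LinearOrder ι]
  [WellFoundedLT ι] [Nonempty ι]

theorem HomAcyclic.directLimit (hd : ∀ i, d (i + 1) ∘ₗ d i = 0)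
    (hpinj : ∀ i, IsPureInjective R (E i)) {M : ι → Type u} [∀ a, AddCommGroup (M a)]
    [∀ a, Module R (M a)] (f : ∀ a b, a ≤ b → M a →ₗ[R] M b) [DirectedSystem M (f · · ·)]
    (hM : ∀ a, HomAcyclic d (M a)) : HomAcyclic d (Module.DirectLimit M f) := by
  let π := DirectSum.toModule R ι _ (Module.DirectLimit.of R ι M f)
  have hπ : Function.Surjective π := fun z => by
    obtain ⟨a, x, rfl⟩ := Module.DirectLimit.exists_of z
    exact ⟨DirectSum.lof R ι M a x, DirectSum.toModule_lof R a x⟩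
  have hsum : HomAcyclic d (DirectSum ι M) := .directSum hM
  have hchain := (ker_collapse_mono f).isChain_range
  have hwf : (Set.range fun b => LinearMap.ker (collapse f b)).IsWF := by
    rw [← Set.image_univ]
    exact ((Set.IsWF.of_wellFoundedLT _).isPWO.image_of_monotone (ker_collapse_mono f)).isWF
  have hpure : ∀ V ∈ Set.range fun b => LinearMap.ker (collapse f b), IsPureMono R V.subtype := by
    rintro _ ⟨b, rfl⟩
    obtain ⟨r, hr⟩ := exists_retraction_ker_collapse f b
    exact isPureMono_of_comp_eq_id hr
  have hker : ∀ V ∈ Set.range fun b => LinearMap.ker (collapse f b), HomAcyclic d V := by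
    rintro _ ⟨b, rfl⟩
    obtain ⟨r, hr⟩ := exists_retraction_ker_collapse f b
    exact hsum.of_retract hr
  have hkerπ : LinearMap.ker π = sSup (Set.range fun b => LinearMap.ker (collapse f b)) :=
    ker_toModule_of_eq_sSup f
  refine HomAcyclic.of_linearEquiv (A := DirectSum ι M ⧸ LinearMap.ker π) ?_
    (π.quotKerEquivOfSurjective hπ)
  rw [hkerπ]
  exact .quotient hd hpinj (isPureMono_subtype_sSup hchain.directedOn hpure)
    (homAcyclic_sSup hd hpinj hchain hwf hpure hker) hsum

theorem HomAcyclic.quotient_iSup (hd : ∀ i, d (i + 1) ∘ₗ d i = 0)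
    (hpinj : ∀ i, IsPureInjective R (E i)) {F : Type u} [AddCommGroup F] [Module R F]
    {N : ι → Submodule R F} (hN : Monotone N) (hFN : ∀ a, HomAcyclic d (F ⧸ N a)) :
    HomAcyclic d (F ⧸ ⨆ a, N a) := by
  let f a b (h : a ≤ b) : (F ⧸ N a) →ₗ[R] F ⧸ N b := Submodule.factor (hN h)
  have : DirectedSystem (fun a => F ⧸ N a) (f · · ·) :=
    ⟨fun a => (N a).mkQ_surjective.forall.2 fun x => Submodule.factor_mk _ x,
      fun _ _ _ hab hbc x => Submodule.factor_comp_apply (hN hab) (hN hbc) x⟩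
  let q a := Module.DirectLimit.of R ι _ f a ∘ₗ (N a).mkQ
  have hq {a b : ι} (h : a ≤ b) : q a = q b := LinearMap.ext fun x =>
    (Module.DirectLimit.of_f (hij := h)).symm.trans
      (congrArg (Module.DirectLimit.of R ι _ f b) (Submodule.factor_mk (hN h) x))
  let s : (F ⧸ ⨆ a, N a) →ₗ[R] Module.DirectLimit _ f :=
    (⨆ a, N a).liftQ (q (Classical.arbitrary ι)) <| iSup_le fun b => by
      rw [(hq (le_max_left _ b)).trans (hq (le_max_right _ b)).symm]
      exact (N b).ker_mkQ.ge.trans (LinearMap.ker_le_ker_comp _ _)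
  let r : Module.DirectLimit _ f →ₗ[R] F ⧸ ⨆ a, N a :=
    Module.DirectLimit.lift R ι _ f (fun a => Submodule.factor (le_iSup N a))
      fun _ _ h x => Submodule.factor_comp_apply (hN h) _ x
  refine (directLimit hd hpinj f hFN).of_retract (s := s) (r := r) ?_
  refine Submodule.linearMap_qext _ (LinearMap.ext fun x => ?_)
  simp [r, s, q]

end Colimit

section Presentation

variable {R : Type u} [CommRing R] {E : ℤ → Type u} [∀ i, AddCommGroup (E i)]
  [∀ i, Module R (E i)] {d : ∀ i, E i →ₗ[R] E (i + 1)}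

lemma homAcyclic_quotient_span_of_finite
    (hacyc : ∀ i, LinearMap.ker (d (i + 1)) = LinearMap.range (d i))
    (hpure : ∀ i, IsPureMono R (LinearMap.ker (d i)).subtype) {X : Type*} {T : Set (X →₀ R)}
    (hT : T.Finite) : HomAcyclic d ((X →₀ R) ⧸ Submodule.span R T) := by
  intro i f hf
  obtain ⟨n, t, -, rfl⟩ := hT.fin_param
  have hrange (x : X) : f (Submodule.mkQ _ (Finsupp.single x 1)) ∈ LinearMap.range (d i) :=
    hacyc i ▸ LinearMap.congr_fun hf _
  choose g hg using hrange
  let G : (X →₀ R) →ₗ[R] E i := Finsupp.linearCombination R g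
  have hG : d i ∘ₗ G = f ∘ₗ Submodule.mkQ _ := by ext x; simpa [G] using hg x
  have hGt (j : Fin n) : d i (G (t j)) = 0 := by
    have htj : t j ∈ Submodule.span R (Set.range t) := Submodule.subset_span ⟨j, rfl⟩
    rw [← LinearMap.comp_apply, hG, LinearMap.comp_apply, Submodule.mkQ_apply,
      (Submodule.Quotient.mk_eq_zero _).2 htj, map_zero]
  obtain ⟨u, hu⟩ := (hpure i).exists_forall_apply_eq t G (fun j => ⟨G (t j), hGt j⟩) fun j => rfl
  refine ⟨Submodule.liftQ _ (G - (LinearMap.ker (d i)).subtype ∘ₗ u) ?_,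
    Submodule.linearMap_qext _ ?_⟩
  · rw [Submodule.span_le]
    rintro _ ⟨j, rfl⟩
    simp [hu]
  · rw [LinearMap.comp_assoc, Submodule.liftQ_mkQ, LinearMap.comp_sub, ← LinearMap.comp_assoc,
      LinearMap.comp_ker_subtype, LinearMap.zero_comp, sub_zero, hG]

lemma exists_monotone_iUnion_eq_of_infinite {α : Type u} {T : Set α} (hT : T.Infinite) :
    ∃ (ι : Type u) (_ : LinearOrder ι) (_ : WellFoundedLT ι) (_ : Nonempty ι) (S : ι → Set α),
      Monotone S ∧ ⋃ a, S a = T ∧ ∀ a, Cardinal.mk (S a) < Cardinal.mk T := by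
  have hinf : Cardinal.aleph0 ≤ Cardinal.mk T :=
    Cardinal.aleph0_le_mk_iff.2 (Set.infinite_coe_iff.2 hT)
  obtain ⟨e⟩ : Nonempty ((Cardinal.mk T).ord.ToType ≃ T) :=
    Cardinal.eq.1 (Cardinal.mk_ord_toType _)
  have := Cardinal.noMaxOrder hinf
  have := hT.nonempty.to_subtype
  have hlt (a : (Cardinal.mk T).ord.ToType) : Cardinal.mk (Set.Iio a) < Cardinal.mk T := by
    simpa using Cardinal.mk_Iio_lt a
  refine ⟨_, inferInstance, inferInstance, e.nonempty, fun a => (fun b => (e b : α)) '' Set.Iio a,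
    fun a b hab => Set.image_mono (Set.Iio_subset_Iio hab), ?_,
    fun a => Cardinal.mk_image_le.trans_lt (hlt a)⟩
  ext x
  simp only [Set.mem_iUnion]
  constructor
  · rintro ⟨a, b, -, rfl⟩
    exact (e b).2
  · intro hx
    obtain ⟨a, ha⟩ := exists_gt (e.symm ⟨x, hx⟩)
    exact ⟨a, _, ha, by simp⟩

theorem homAcyclic_quotient_span
    (hacyc : ∀ i, LinearMap.ker (d (i + 1)) = LinearMap.range (d i))
    (hpure : ∀ i, IsPureMono R (LinearMap.ker (d i)).subtype)
    (hpinj : ∀ i, IsPureInjective R (E i)) {X : Type u} (T : Set (X →₀ R)) :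
    HomAcyclic d ((X →₀ R) ⧸ Submodule.span R T) := by
  have hd (i : ℤ) : d (i + 1) ∘ₗ d i = 0 := LinearMap.range_le_ker_iff.1 (hacyc i).ge
  induction hκ : Cardinal.mk T using WellFoundedLT.induction generalizing T with
  | ind κ ih =>
    rcases T.finite_or_infinite with hT | hT
    · exact homAcyclic_quotient_span_of_finite hacyc hpure hT
    obtain ⟨ι, _, _, _, S, hS, rfl, hlt⟩ := exists_monotone_iUnion_eq_of_infinite hT
    rw [Submodule.span_iUnion]
    exact .quotient_iSup hd hpinj (fun a b hab => Submodule.span_mono (hS hab))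
      fun a => ih _ (hκ ▸ hlt a) _ rfl

theorem homAcyclic_of_pureAcyclic_of_pureInjective
    (hacyc : ∀ i, LinearMap.ker (d (i + 1)) = LinearMap.range (d i))
    (hpure : ∀ i, IsPureMono R (LinearMap.ker (d i)).subtype)
    (hpinj : ∀ i, IsPureInjective R (E i)) (A : Type u) [AddCommGroup A] [Module R A] :
    HomAcyclic d A := by
  let π : (A →₀ R) →ₗ[R] A := Finsupp.linearCombination R id
  have hπ : Function.Surjective π := Finsupp.linearCombination_id_surjective R A
  have h := homAcyclic_quotient_span hacyc hpure hpinj (LinearMap.ker π : Set (A →₀ R))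
  rw [Submodule.span_eq] at h
  exact h.of_linearEquiv (π.quotKerEquivOfSurjective hπ)

end Presentation

/-- a pure acyclic complex of pure injective modules is contractible. -/
theorem pure_acyclic_complex_of_pureInjectives_contractible (R : Type u) [CommRing R]
    (E : ℤ → Type u) [∀ i, AddCommGroup (E i)] [∀ i, Module R (E i)]
    (d : ∀ i : ℤ, E i →ₗ[R] E (i + 1))
    (hacyc : ∀ i, LinearMap.ker (d (i + 1)) = LinearMap.range (d i))
    (hpure : ∀ i, IsPureMono R (LinearMap.ker (d i)).subtype)
    (hpinj : ∀ i, IsPureInjective R (E i)) :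
    ∃ s : ∀ i : ℤ, E (i + 1) →ₗ[R] E i,
      ∀ i, (s (i + 1)).comp (d (i + 1)) + (d i).comp (s i) = LinearMap.id := by
  have hd (i : ℤ) : d (i + 1) ∘ₗ d i = 0 := LinearMap.range_le_ker_iff.1 (hacyc i).ge
  exact exists_contraction_of_homAcyclic_ker hd fun i =>
    homAcyclic_of_pureAcyclic_of_pureInjective hacyc hpure hpinj (LinearMap.ker (d i))
end
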